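/- Let n ≥ 1, let 1 ≤ p, q ≤ ∞, s > 0, β > 0, and choose 1 ≤ p₃, p₄, q₃, q₄ ≤ ∞ with 1/p = 1/p₃ + 1/p₄ and 1/q = 1/q₃ + 1/q₄. Then there exists a constant C > 0, depending only on n, s, β and these indices, such that for all Schwartz functions f₁, f₂ on ℝⁿ the para-product series T_{f₁} f₂ = Σ_{k∈ℤ} (Δ_k f₂)(S_{k−1} f₁) converges in the space of tempered distributions and satisfies ‖Σ_{k∈ℤ} (Δ_k f₂)(S_{k−1} f₁)‖_{Ḃ^s_{p,q}} ≤ C ‖f₁‖_{Ḃ^{-β}_{p₃,q₃}} ‖f₂‖_{Ḃ^{s+β}_{p₄,q₄}} in [0,∞]. -/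

import Mathlib

open MeasureTheory Real Complex Filter Function
open scoped ENNReal FourierTransform SchwartzMap

noncomputable section

/-- The properties of the radial smooth cutoff `χ` used to build the
Littlewood–Paley decomposition: smooth, compactly supported, radial,
`0 ≤ χ ≤ 1`, `χ = 1` on `{‖ξ‖ ≤ 3/4}` and `χ = 0` on `{‖ξ‖ > 4/3}`. -/
def IsLPCutoff {n : ℕ} (χ : EuclideanSpace ℝ (Fin n) → ℝ) : Prop :=
  ContDiff ℝ ((⊤ : ℕ∞) : WithTop ℕ∞) χ ∧ HasCompactSupport χ ∧
    (∀ ξ η, ‖ξ‖ = ‖η‖ → χ ξ = χ η) ∧ (∀ ξ, 0 ≤ χ ξ) ∧ (∀ ξ, χ ξ ≤ 1) ∧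
    (∀ ξ, ‖ξ‖ ≤ 3 / 4 → χ ξ = 1) ∧ (∀ ξ, 4 / 3 < ‖ξ‖ → χ ξ = 0)

/-- The low-frequency Littlewood–Paley projection `S_j f = 𝓕⁻¹(χ(·/2^j) 𝓕 f)`. -/
def Sproj {n : ℕ} (χ : EuclideanSpace ℝ (Fin n) → ℝ) (j : ℤ)
    (f : EuclideanSpace ℝ (Fin n) → ℂ) : EuclideanSpace ℝ (Fin n) → ℂ :=
  𝓕⁻ fun ξ => ((χ ((2 : ℝ) ^ (-j) • ξ) : ℝ) : ℂ) * 𝓕 f ξ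

/-- The Littlewood–Paley block `Δ_j f = 𝓕⁻¹(φ̂(·/2^j) 𝓕 f)`, where
`φ̂(ξ) = χ(ξ/2) - χ(ξ)`, i.e. `φ̂(ξ/2^j) = χ(ξ/2^(j+1)) - χ(ξ/2^j)`. -/
def Dproj {n : ℕ} (χ : EuclideanSpace ℝ (Fin n) → ℝ) (j : ℤ)
    (f : EuclideanSpace ℝ (Fin n) → ℂ) : EuclideanSpace ℝ (Fin n) → ℂ :=
  𝓕⁻ fun ξ => ((χ ((2 : ℝ) ^ (-(j + 1)) • ξ) - χ ((2 : ℝ) ^ (-j) • ξ) : ℝ) : ℂ) * 𝓕 f ξ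

/-- The `ℓ^q(ℤ)` norm of a sequence of extended nonnegative reals, with the usual
supremum modification for `q = ∞`. -/
def lqNorm (q : ℝ≥0∞) (a : ℤ → ℝ≥0∞) : ℝ≥0∞ :=
  if q = ∞ then ⨆ j, a j else (∑' j, a j ^ q.toReal) ^ (1 / q.toReal)

/-- The homogeneous Besov norm `‖f‖_{Ḃ^s_{p,q}}`, valued in `[0,∞]`. -/
def besovNorm {n : ℕ} (χ : EuclideanSpace ℝ (Fin n) → ℝ) (s : ℝ) (p q : ℝ≥0∞)
    (f : EuclideanSpace ℝ (Fin n) → ℂ) : ℝ≥0∞ :=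
  lqNorm q fun j => (2 : ℝ≥0∞) ^ ((j : ℝ) * s) * eLpNorm (Dproj χ j f) p volume

/-- Weighted Minkowski inequality: averaging functions of `L^p` norm at most `A` against a weight
`w` yields a function of `L^p` norm at most `(∫ w) * A`. -/
theorem eLpNorm_lintegral_weight_le {X Y : Type*} [MeasurableSpace X] [MeasurableSpace Y]
    {μ : Measure X} {ν : Measure Y} [SFinite μ] [SFinite ν] {w : Y → ℝ≥0∞} (hw : Measurable w)
    {g : X → Y → ℝ≥0∞} (hg : Measurable (uncurry g)) {p A : ℝ≥0∞} (hp : 1 ≤ p)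
    (hA : ∀ y, eLpNorm (fun x => g x y) p μ ≤ A) :
    eLpNorm (fun x => ∫⁻ y, w y * g x y ∂ν) p μ ≤ (∫⁻ y, w y ∂ν) * A := by
  have hp0 : p ≠ 0 := (zero_lt_one.trans_le hp).ne'
  rcases eq_or_ne p ∞ with rfl | hpt
  · have hae : ∀ᵐ x ∂μ, ∀ᵐ y ∂ν, g x y ≤ A := by
      rw [Measure.ae_ae_comm (p := fun x y => g x y ≤ A) (measurableSet_le hg measurable_const)]
      refine .of_forall fun y => ?_
      filter_upwards [enorm_ae_le_eLpNormEssSup (fun x => g x y) μ] with x hx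
      exact (by simpa using hx : g x y ≤ _).trans (by simpa using hA y)
    rw [eLpNorm_exponent_top]
    refine eLpNormEssSup_le_of_ae_enorm_bound ?_
    filter_upwards [hae] with x hx
    rw [enorm_eq_self, ← lintegral_mul_const A hw]
    refine lintegral_mono_ae ?_
    filter_upwards [hx] with y hy
    gcongr
  · have hr : 1 ≤ p.toReal := by
      simpa using ENNReal.toReal_mono hpt hp
    set r := p.toReal with hrdef
    have hr0 : 0 < r := by linarith
    have hgx : ∀ x, Measurable (g x) := fun x => hg.of_uncurry_left
    have hA' : ∀ y, ∫⁻ x, g x y ^ r ∂μ ≤ A ^ r := by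
      intro y
      have := hA y
      rw [eLpNorm_eq_lintegral_rpow_enorm_toReal hp0 hpt, one_div,
        ENNReal.rpow_inv_le_iff hr0] at this
      simpa using this
    have hpt : ∀ x, (∫⁻ y, w y * g x y ∂ν) ^ r
        ≤ (∫⁻ y, w y ∂ν) ^ (r - 1) * ∫⁻ y, w y * g x y ^ r ∂ν := by
      intro x
      have h1 : 0 ≤ 1 - r⁻¹ := by
        have := inv_le_one_of_one_le₀ hr
        linarith
      have h2 : 0 ≤ r⁻¹ := by positivity
      have key := ENNReal.lintegral_mul_norm_pow_le (μ := ν) (f := w)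
        (g := fun y => w y * g x y ^ r) hw.aemeasurable (by fun_prop) h1 h2 (by ring)
      have hEq : ∀ y, w y ^ (1 - r⁻¹) * (w y * g x y ^ r) ^ r⁻¹ = w y * g x y := by
        intro y
        rw [ENNReal.mul_rpow_of_nonneg _ _ h2, ← ENNReal.rpow_mul, mul_inv_cancel₀ hr0.ne',
          ENNReal.rpow_one, ← mul_assoc, ← ENNReal.rpow_add_of_nonneg _ _ h1 h2]
        simp
      simp only [hEq] at key
      calc _ ≤ _ := ENNReal.rpow_le_rpow key hr0.le
        _ = _ := by
          rw [ENNReal.mul_rpow_of_nonneg _ _ hr0.le, ← ENNReal.rpow_mul, ← ENNReal.rpow_mul,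
            inv_mul_cancel₀ hr0.ne', ENNReal.rpow_one, sub_mul, inv_mul_cancel₀ hr0.ne', one_mul]
    rw [eLpNorm_eq_lintegral_rpow_enorm_toReal hp0 ‹_›, one_div, ENNReal.rpow_inv_le_iff hr0]
    have hm : Measurable fun z : X × Y => w z.2 * g z.1 z.2 ^ r :=
      (hw.comp measurable_snd).mul (hg.pow_const r)
    calc ∫⁻ x, ‖∫⁻ y, w y * g x y ∂ν‖ₑ ^ r ∂μ
        ≤ ∫⁻ x, (∫⁻ y, w y ∂ν) ^ (r - 1) * ∫⁻ y, w y * g x y ^ r ∂ν ∂μ :=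
          lintegral_mono fun x => by simpa using hpt x
      _ = (∫⁻ y, w y ∂ν) ^ (r - 1) * ∫⁻ y, ∫⁻ x, w y * g x y ^ r ∂μ ∂ν := by
          rw [lintegral_const_mul _ hm.lintegral_prod_right,
            lintegral_lintegral_swap hm.aemeasurable]
      _ ≤ (∫⁻ y, w y ∂ν) ^ (r - 1) * ∫⁻ y, w y * A ^ r ∂ν := by
          gcongr with y
          rw [lintegral_const_mul _ ((hg.of_uncurry_right).pow_const r)]
          gcongr
          exact hA' y
      _ = ((∫⁻ y, w y ∂ν) * A) ^ r := by
          rw [lintegral_mul_const _ hw, ENNReal.mul_rpow_of_nonneg _ _ hr0.le, ← mul_assoc]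
          congr 1
          conv_lhs => rw [← ENNReal.rpow_one (∫⁻ y, w y ∂ν), ← ENNReal.rpow_mul, one_mul]
          rw [← ENNReal.rpow_add_of_nonneg _ _ (by linarith) zero_le_one, sub_add_cancel]

theorem lqNorm_eq_eLpNorm_count {q : ℝ≥0∞} (hq : q ≠ 0) (a : ℤ → ℝ≥0∞) :
    lqNorm q a = eLpNorm a q Measure.count := by
  unfold lqNorm
  split_ifs with h
  · subst h
    simp [eLpNormEssSup]
  · rw [eLpNorm_eq_lintegral_rpow_enorm_toReal hq h, lintegral_count]
    simp

theorem lqNorm_mono {q : ℝ≥0∞} {a b : ℤ → ℝ≥0∞} (h : ∀ j, a j ≤ b j) :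
    lqNorm q a ≤ lqNorm q b := by
  unfold lqNorm
  split_ifs
  · exact iSup_mono h
  · gcongr with j
    exact h j

theorem lqNorm_comp_sub_right (q : ℝ≥0∞) (a : ℤ → ℝ≥0∞) (l : ℤ) :
    lqNorm q (fun j => a (j - l)) = lqNorm q a := by
  unfold lqNorm
  split_ifs
  · exact (Equiv.subRight l).iSup_comp (g := a)
  · rw [(Equiv.subRight l).tsum_eq (fun j => a j ^ q.toReal) |>.symm]
    rfl

theorem lqNorm_const_mul {q : ℝ≥0∞} (hq : 1 ≤ q) (c : ℝ≥0∞) (a : ℤ → ℝ≥0∞) :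
    lqNorm q (fun j => c * a j) = c * lqNorm q a := by
  unfold lqNorm
  split_ifs with h
  · rw [ENNReal.mul_iSup]
  · have hr : 0 < q.toReal := ENNReal.toReal_pos (zero_lt_one.trans_le hq).ne' h
    simp_rw [ENNReal.mul_rpow_of_nonneg _ _ hr.le, ENNReal.tsum_mul_left]
    rw [ENNReal.mul_rpow_of_nonneg _ _ (by positivity), ← ENNReal.rpow_mul,
      mul_one_div_cancel hr.ne', ENNReal.rpow_one]

/-- Discrete Young inequality for a weighted superposition of translates. -/
theorem lqNorm_tsum_weight_shift_le {ι : Type*} [Countable ι] {q : ℝ≥0∞} (hq : 1 ≤ q)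
    (w : ι → ℝ≥0∞) (σ : ι → ℤ) (c : ℤ → ℝ≥0∞) :
    lqNorm q (fun k => ∑' i, w i * c (k - σ i)) ≤ (∑' i, w i) * lqNorm q c := by
  let _ : MeasurableSpace ι := ⊤
  have hq0 : q ≠ 0 := (zero_lt_one.trans_le hq).ne'
  have := eLpNorm_lintegral_weight_le (μ := (Measure.count : Measure ℤ))
    (ν := (Measure.count : Measure ι)) (w := w) (by fun_prop)
    (g := fun k i => c (k - σ i)) .of_discrete hq (A := lqNorm q c)
    (fun i => by rw [← lqNorm_eq_eLpNorm_count hq0, lqNorm_comp_sub_right])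
  simpa only [lintegral_count, ← lqNorm_eq_eLpNorm_count hq0] using this

/-- Hölder's inequality for sequences. -/
theorem lqNorm_mul_le {q r t : ℝ≥0∞} (hq : 1 ≤ q) (hr : 1 ≤ r) (ht : 1 ≤ t)
    (h : 1 / q = 1 / r + 1 / t) (a b : ℤ → ℝ≥0∞) :
    lqNorm q (fun j => a j * b j) ≤ lqNorm r a * lqNorm t b := by
  rcases eq_or_ne r ∞ with rfl | hrt
  · obtain rfl : q = t := by simpa using h
    rw [← lqNorm_const_mul hq]
    refine lqNorm_mono fun j => ?_
    gcongr
    simpa [lqNorm] using le_iSup a j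
  rcases eq_or_ne t ∞ with rfl | htt
  · obtain rfl : q = r := by simpa using h
    rw [mul_comm, ← lqNorm_const_mul hq]
    refine lqNorm_mono fun j => ?_
    rw [mul_comm]
    gcongr
    simpa [lqNorm] using le_iSup b j
  have hr0 : 0 < r.toReal := ENNReal.toReal_pos (zero_lt_one.trans_le hr).ne' hrt
  have ht0 : 0 < t.toReal := ENNReal.toReal_pos (zero_lt_one.trans_le ht).ne' htt
  have hqt : q ≠ ∞ := by
    rintro rfl
    have h' : 1 / r + 1 / t = 0 := by simpa using h.symm
    exact hrt (by simpa using (add_eq_zero.1 h').1)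
  have hq0 : 0 < q.toReal := ENNReal.toReal_pos (zero_lt_one.trans_le hq).ne' hqt
  have hreal : 1 / q.toReal = 1 / r.toReal + 1 / t.toReal := by
    have := congrArg ENNReal.toReal h
    rw [ENNReal.toReal_add (by simpa using (zero_lt_one.trans_le hr).ne')
      (by simpa using (zero_lt_one.trans_le ht).ne')] at this
    simpa using this
  have hlt : q.toReal < r.toReal := by
    rw [← one_div_lt_one_div hr0 hq0, hreal]
    have : 0 < 1 / t.toReal := by positivity
    linarith
  have := ENNReal.lintegral_Lp_mul_le_Lq_mul_Lr hq0 hlt hreal (Measure.count : Measure ℤ)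
    (f := a) (g := b) (by fun_prop) (by fun_prop)
  simpa [lqNorm, hqt, hrt, htt, lintegral_count] using this

section FourierMultipliers

variable {V : Type*} [NormedAddCommGroup V] [InnerProductSpace ℝ V] [FiniteDimensional ℝ V]
  [MeasurableSpace V] [BorelSpace V]

theorem integral_fourier_mul_eq_integral_mul_fourier {f g : V → ℂ} (hf : Integrable f)
    (hg : Integrable g) : ∫ ξ, 𝓕 f ξ * g ξ = ∫ x, f x * 𝓕 g x := by
  have := VectorFourier.integral_fourierIntegral_smul_eq_flip (e := Real.fourierChar)
    (μ := (volume : Measure V)) (ν := (volume : Measure V)) (L := innerₗ V) (f := f) (g := g)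
    Real.continuous_fourierChar (by simpa using! continuous_inner) hf hg
  rw [flip_innerₗ] at this
  exact this

/-- An integrable Fourier multiplier acts by convolution with its inverse Fourier transform. -/
theorem fourierInv_mul_fourier_eq_integral {m G : V → ℂ} (hm : Integrable m) (hG : Integrable G)
    (x : V) : 𝓕⁻ (fun ξ => m ξ * 𝓕 G ξ) x = ∫ y, 𝓕⁻ m (x - y) * G y := by
  have hg : Integrable fun ξ => Real.fourierChar (inner ℝ ξ x) • m ξ := by
    simpa using (Real.fourierIntegral_convergent_iff (μ := (volume : Measure V)) (-x)).2 hm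
  rw [Real.fourierInv_eq]
  calc ∫ ξ, Real.fourierChar (inner ℝ ξ x) • (m ξ * 𝓕 G ξ)
      = ∫ ξ, 𝓕 G ξ * (Real.fourierChar (inner ℝ ξ x) • m ξ) := by
        congr 1 with ξ
        simp only [Circle.smul_def, smul_eq_mul]
        ring
    _ = ∫ y, G y * 𝓕 (fun ξ => Real.fourierChar (inner ℝ ξ x) • m ξ) y :=
        integral_fourier_mul_eq_integral_mul_fourier hG hg
    _ = ∫ y, 𝓕⁻ m (x - y) * G y := by
        congr 1 with y
        rw [mul_comm, Real.fourier_eq, Real.fourierInv_eq]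
        congr 2 with ξ
        rw [smul_smul, ← AddChar.map_add_eq_mul, inner_sub_right]
        congr 2
        ring

/-- The Fourier transform of a product is the convolution of the Fourier transforms. -/
theorem fourier_mul_fourierInv_eq_integral {m G : V → ℂ} (hm : Integrable m) (hG : Integrable G)
    (x : V) : 𝓕 (fun ξ => m ξ * 𝓕⁻ G ξ) x = ∫ y, 𝓕 m (x - y) * G y := by
  have h1 : 𝓕 (fun ξ => m ξ * 𝓕⁻ G ξ) x = 𝓕⁻ (fun ξ => m ξ * 𝓕 (fun y => G (-y)) ξ) (-x) := by
    rw [Real.fourierInv_eq_fourier_neg, neg_neg, Real.fourierInv_eq_fourier_comp_neg G]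
  rw [h1, fourierInv_mul_fourier_eq_integral hm hG.comp_neg,
    ← integral_neg_eq_self]
  congr 1 with y
  rw [Real.fourierInv_eq_fourier_neg, show -(-x - -y) = x - y by abel, neg_neg]

theorem enorm_fourierInv_le_lintegral (u : V → ℂ) (x : V) : ‖𝓕⁻ u x‖ₑ ≤ ∫⁻ ξ, ‖u ξ‖ₑ := by
  rw [Real.fourierInv_eq]
  refine (enorm_integral_le_lintegral_enorm _).trans_eq ?_
  congr 1 with ξ
  rw [← ofReal_norm, Circle.norm_smul, ofReal_norm]

/-- Young's inequality for the convolution with an `L¹` kernel. -/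
theorem eLpNorm_integral_sub_mul_le {K G : V → ℂ} (hK : Continuous K) (hG : Continuous G)
    {p : ℝ≥0∞} (hp : 1 ≤ p) :
    eLpNorm (fun x => ∫ y, K (x - y) * G y) p volume
      ≤ (∫⁻ y, ‖K y‖ₑ) * eLpNorm G p volume := by
  calc eLpNorm (fun x => ∫ y, K (x - y) * G y) p volume
      ≤ eLpNorm (fun x => ∫⁻ y, ‖K y‖ₑ * ‖G (x - y)‖ₑ) p volume := by
        refine eLpNorm_mono_enorm fun x => ?_
        rw [enorm_eq_self, ← integral_sub_left_eq_self _ _ x]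
        refine (enorm_integral_le_lintegral_enorm _).trans_eq ?_
        simp
    _ ≤ _ := by
        refine eLpNorm_lintegral_weight_le (g := fun x y => ‖G (x - y)‖ₑ) (by fun_prop)
          (hG.comp continuous_sub).measurable.enorm hp fun y => ?_
        have h1 : eLpNorm (fun x => ‖G (x - y)‖ₑ) p volume
            = eLpNorm (fun x => G (x - y)) p volume := eLpNorm_congr_enorm_ae (by simp)
        rw [h1]
        exact (eLpNorm_comp_measurePreserving hG.aestronglyMeasurable
          (measurePreserving_sub_right volume y)).le

/-- The `L¹` norm of the kernel of a Fourier multiplier is invariant under dilations. -/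
theorem lintegral_enorm_fourierInv_comp_smul {m m' : 𝓢(V, ℂ)} {r : ℝ} (hr : 0 < r)
    (h : ∀ ξ, m' ξ = m (r • ξ)) :
    ∫⁻ x, ‖𝓕⁻ (m' : V → ℂ) x‖ₑ = ∫⁻ x, ‖𝓕⁻ (m : V → ℂ) x‖ₑ := by
  have hI : ∀ u : 𝓢(V, ℂ), Integrable (𝓕⁻ (u : V → ℂ)) := fun u => by
    rw [← SchwartzMap.fourierInv_coe]
    exact (𝓕⁻ u).integrable
  rw [← ofReal_integral_norm_eq_lintegral_enorm (hI m'),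
    ← ofReal_integral_norm_eq_lintegral_enorm (hI m)]
  congr 1
  set d := Module.finrank ℝ V
  have hpt : ∀ x, 𝓕⁻ (m' : V → ℂ) x = ((r ^ d)⁻¹ : ℝ) • 𝓕⁻ (m : V → ℂ) (r⁻¹ • x) := by
    intro x
    have h2 := Measure.integral_comp_smul (volume : Measure V)
      (fun ξ => Real.fourierChar (inner ℝ ξ (r⁻¹ • x)) • m ξ) r
    rw [abs_of_pos (by positivity)] at h2
    rw [Real.fourierInv_eq, Real.fourierInv_eq, ← h2]
    congr 1 with ξ
    rw [h, inner_smul_left, inner_smul_right]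
    simp [hr.ne']
  simp_rw [hpt, norm_smul]
  rw [integral_const_mul]
  have h3 := Measure.integral_comp_smul (volume : Measure V)
      (fun x => ‖𝓕⁻ (m : V → ℂ) x‖) r⁻¹
  rw [h3, abs_of_pos (by positivity), Real.norm_of_nonneg (by positivity), smul_eq_mul, ← mul_assoc,
    inv_pow, inv_inv, inv_mul_cancel₀ (by positivity), one_mul]

end FourierMultipliers

section LittlewoodPaley

variable {n : ℕ} {χ : EuclideanSpace ℝ (Fin n) → ℝ}

/-- The dilated cutoff `χ(·/2^j)` as a Schwartz function. -/
def lowCutoff (hχ : IsLPCutoff χ) (j : ℤ) : 𝓢(EuclideanSpace ℝ (Fin n), ℂ) :=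
  HasCompactSupport.toSchwartzMap (f := fun ξ => ((χ ((2 : ℝ) ^ (-j) • ξ) : ℝ) : ℂ))
    ((hχ.2.1.comp_smul (by positivity)).comp_left (g := ((↑) : ℝ → ℂ)) (by simp))
    (Complex.ofRealCLM.contDiff.comp (hχ.1.comp (contDiff_const_smul _)))

/-- The dilated annular cutoff `χ(·/2^(j+1)) - χ(·/2^j)` as a Schwartz function. -/
def bandCutoff (hχ : IsLPCutoff χ) (j : ℤ) : 𝓢(EuclideanSpace ℝ (Fin n), ℂ) :=
  lowCutoff hχ (j + 1) - lowCutoff hχ j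

/-- The Fourier multiplier with Schwartz symbol `m`, acting on Schwartz functions. -/
def schwartzMultiplier (m f : 𝓢(EuclideanSpace ℝ (Fin n), ℂ)) :
    𝓢(EuclideanSpace ℝ (Fin n), ℂ) :=
  𝓕⁻ (SchwartzMap.pairing (ContinuousLinearMap.mul ℂ ℂ) m (𝓕 f))

theorem lowCutoff_apply (hχ : IsLPCutoff χ) (j : ℤ) (ξ : EuclideanSpace ℝ (Fin n)) :
    lowCutoff hχ j ξ = ((χ ((2 : ℝ) ^ (-j) • ξ) : ℝ) : ℂ) := rfl

theorem bandCutoff_apply (hχ : IsLPCutoff χ) (j : ℤ) (ξ : EuclideanSpace ℝ (Fin n)) :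
    bandCutoff hχ j ξ
      = ((χ ((2 : ℝ) ^ (-(j + 1)) • ξ) - χ ((2 : ℝ) ^ (-j) • ξ) : ℝ) : ℂ) := by
  simp [bandCutoff, lowCutoff_apply]

theorem coe_schwartzMultiplier (m f : 𝓢(EuclideanSpace ℝ (Fin n), ℂ)) :
    ⇑(schwartzMultiplier m f) = 𝓕⁻ fun ξ => m ξ * 𝓕 (⇑f) ξ := by
  rw [schwartzMultiplier, SchwartzMap.fourierInv_coe]
  congr 1

theorem fourier_schwartzMultiplier (m f : 𝓢(EuclideanSpace ℝ (Fin n), ℂ))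
    (ξ : EuclideanSpace ℝ (Fin n)) :
    𝓕 (⇑(schwartzMultiplier m f)) ξ = m ξ * 𝓕 (⇑f) ξ := by
  rw [← SchwartzMap.fourier_coe, schwartzMultiplier, FourierTransform.fourier_fourierInv_eq]
  rfl

theorem Sproj_eq (hχ : IsLPCutoff χ) (j : ℤ) (f : EuclideanSpace ℝ (Fin n) → ℂ) :
    Sproj χ j f = 𝓕⁻ fun ξ => lowCutoff hχ j ξ * 𝓕 f ξ := rfl

theorem Dproj_eq (hχ : IsLPCutoff χ) (j : ℤ) (f : EuclideanSpace ℝ (Fin n) → ℂ) :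
    Dproj χ j f = 𝓕⁻ fun ξ => bandCutoff hχ j ξ * 𝓕 f ξ := by
  simp_rw [bandCutoff_apply]
  rfl

theorem Sproj_schwartz (hχ : IsLPCutoff χ) (j : ℤ) (f : 𝓢(EuclideanSpace ℝ (Fin n), ℂ)) :
    Sproj χ j f = schwartzMultiplier (lowCutoff hχ j) f := by
  rw [coe_schwartzMultiplier, Sproj_eq hχ]

theorem Dproj_schwartz (hχ : IsLPCutoff χ) (j : ℤ) (f : 𝓢(EuclideanSpace ℝ (Fin n), ℂ)) :
    Dproj χ j f = schwartzMultiplier (bandCutoff hχ j) f := by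
  rw [coe_schwartzMultiplier, Dproj_eq hχ]

theorem norm_two_zpow_neg_smul (j : ℤ) (ξ : EuclideanSpace ℝ (Fin n)) :
    ‖(2 : ℝ) ^ (-j) • ξ‖ = ‖ξ‖ / 2 ^ j := by
  rw [norm_smul, Real.norm_of_nonneg (by positivity), zpow_neg, inv_mul_eq_div]

theorem norm_le_of_lowCutoff_ne_zero (hχ : IsLPCutoff χ) {j : ℤ}
    {ξ : EuclideanSpace ℝ (Fin n)} (h : lowCutoff hχ j ξ ≠ 0) : ‖ξ‖ ≤ 4 / 3 * 2 ^ j := by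
  by_contra! hlt
  refine h ?_
  rw [lowCutoff_apply, hχ.2.2.2.2.2.2 _ (by
    rw [norm_two_zpow_neg_smul, lt_div_iff₀ (by positivity)]
    exact hlt)]
  simp

theorem norm_bounds_of_bandCutoff_ne_zero (hχ : IsLPCutoff χ) {j : ℤ}
    {ξ : EuclideanSpace ℝ (Fin n)} (h : bandCutoff hχ j ξ ≠ 0) :
    3 / 4 * 2 ^ j ≤ ‖ξ‖ ∧ ‖ξ‖ ≤ 8 / 3 * 2 ^ j := by
  have hpos : (0 : ℝ) < 2 ^ j := by positivity
  have h2 : (2 : ℝ) ^ (j + 1) = 2 * 2 ^ j := by rw [zpow_add₀ two_ne_zero]; ring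
  constructor
  · by_contra! hlt
    refine h ?_
    rw [bandCutoff_apply, hχ.2.2.2.2.2.1 ((2 : ℝ) ^ (-j) • ξ) (by
        rw [norm_two_zpow_neg_smul, div_le_iff₀ hpos]
        exact hlt.le), hχ.2.2.2.2.2.1 _ (by
        rw [norm_two_zpow_neg_smul, div_le_iff₀ (by positivity), h2]
        linarith)]
    simp
  · by_contra! hlt
    refine h ?_
    rw [bandCutoff_apply, hχ.2.2.2.2.2.2 ((2 : ℝ) ^ (-j) • ξ) (by
        rw [norm_two_zpow_neg_smul, lt_div_iff₀ hpos]
        linarith), hχ.2.2.2.2.2.2 _ (by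
        rw [norm_two_zpow_neg_smul, lt_div_iff₀ (by positivity), h2]
        linarith)]
    simp

theorem enorm_lowCutoff_le_one (hχ : IsLPCutoff χ) (j : ℤ) (ξ : EuclideanSpace ℝ (Fin n)) :
    ‖lowCutoff hχ j ξ‖ₑ ≤ 1 := by
  rw [← ofReal_norm, ENNReal.ofReal_le_one, lowCutoff_apply, Complex.norm_real,
    Real.norm_of_nonneg (hχ.2.2.2.1 _)]
  exact hχ.2.2.2.2.1 _

theorem enorm_bandCutoff_le_one (hχ : IsLPCutoff χ) (j : ℤ) (ξ : EuclideanSpace ℝ (Fin n)) :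
    ‖bandCutoff hχ j ξ‖ₑ ≤ 1 := by
  rw [← ofReal_norm, ENNReal.ofReal_le_one, bandCutoff_apply, Complex.norm_real,
    Real.norm_eq_abs, abs_le]
  have h0 := hχ.2.2.2.1
  have h1 := hχ.2.2.2.2.1
  constructor <;> linarith [h0 ((2 : ℝ) ^ (-(j + 1)) • ξ), h1 ((2 : ℝ) ^ (-(j + 1)) • ξ),
    h0 ((2 : ℝ) ^ (-j) • ξ), h1 ((2 : ℝ) ^ (-j) • ξ)]

/-- If `2^i ≤ C 2^j` with `C < 2^(d+1)` then `i ≤ j + d`. -/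
theorem le_add_of_two_zpow_le {i j d : ℤ} {C : ℝ} (h : (2 : ℝ) ^ i ≤ C * 2 ^ j)
    (hC : C < 2 ^ (d + 1)) : i ≤ j + d := by
  have h1 : (2 : ℝ) ^ i < 2 ^ (j + d + 1) := by
    rw [add_assoc, zpow_add₀ two_ne_zero, mul_comm]
    exact h.trans_lt (by gcongr)
  have := (zpow_lt_zpow_iff_right₀ (one_lt_two : (1 : ℝ) < 2)).1 h1
  omega

/-- The annular cutoffs overlap boundedly often. -/
theorem tsum_enorm_bandCutoff_le (hχ : IsLPCutoff χ) (ξ : EuclideanSpace ℝ (Fin n)) :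
    ∑' k : ℤ, ‖bandCutoff hχ k ξ‖ₑ ≤ 3 := by
  set l := Int.log 2 ‖ξ‖ with hl
  rw [tsum_eq_sum (s := Finset.Icc (l - 1) (l + 1))]
  · refine (Finset.sum_le_card_nsmul _ _ 1 fun k _ => enorm_bandCutoff_le_one hχ k ξ).trans ?_
    rw [Int.card_Icc, show (l + 1 + 1 - (l - 1)).toNat = 3 by omega]
    norm_num
  · intro k hk
    by_contra hne
    obtain ⟨h1, h2⟩ := norm_bounds_of_bandCutoff_ne_zero hχ (enorm_ne_zero.1 hne)
    have hξ : 0 < ‖ξ‖ := lt_of_lt_of_le (by positivity) h1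
    have h3 : (2 : ℝ) ^ l ≤ ‖ξ‖ := by exact_mod_cast Int.zpow_log_le_self (b := 2) one_lt_two hξ
    have h4 : ‖ξ‖ < (2 : ℝ) ^ (l + 1) := by
      exact_mod_cast Int.lt_zpow_succ_log_self (b := 2) one_lt_two ‖ξ‖
    rw [zpow_add₀ two_ne_zero] at h4
    have h5 : k ≤ l + 1 := le_add_of_two_zpow_le (C := 8 / 3) (by linarith) (by norm_num)
    have h6 : l ≤ k + 1 := le_add_of_two_zpow_le (C := 8 / 3) (by linarith) (by norm_num)
    rw [Finset.mem_Icc] at hk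
    omega

theorem enorm_Sproj_le (hχ : IsLPCutoff χ) (j : ℤ) (f : EuclideanSpace ℝ (Fin n) → ℂ)
    (x : EuclideanSpace ℝ (Fin n)) : ‖Sproj χ j f x‖ₑ ≤ ∫⁻ ξ, ‖𝓕 f ξ‖ₑ := by
  rw [Sproj_eq hχ]
  refine (enorm_fourierInv_le_lintegral _ _).trans (lintegral_mono fun ξ => ?_)
  rw [enorm_mul]
  exact mul_le_of_le_one_left' (enorm_lowCutoff_le_one hχ j ξ)

theorem enorm_Dproj_le (hχ : IsLPCutoff χ) (j : ℤ) (f : EuclideanSpace ℝ (Fin n) → ℂ)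
    (x : EuclideanSpace ℝ (Fin n)) :
    ‖Dproj χ j f x‖ₑ ≤ ∫⁻ ξ, ‖bandCutoff hχ j ξ‖ₑ * ‖𝓕 f ξ‖ₑ := by
  rw [Dproj_eq hχ]
  refine (enorm_fourierInv_le_lintegral _ _).trans_eq ?_
  simp_rw [enorm_mul]

theorem lintegral_enorm_fourier_lt_top (f : 𝓢(EuclideanSpace ℝ (Fin n), ℂ)) :
    ∫⁻ ξ, ‖𝓕 (⇑f) ξ‖ₑ < ∞ := by
  rw [← SchwartzMap.fourier_coe]
  exact (𝓕 f).integrable.2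

theorem continuous_fourier_schwartz (f : 𝓢(EuclideanSpace ℝ (Fin n), ℂ)) :
    Continuous (𝓕 (⇑f)) := by
  rw [← SchwartzMap.fourier_coe]
  exact (𝓕 f).continuous

theorem tsum_lintegral_bandCutoff_lt_top (hχ : IsLPCutoff χ)
    (f : 𝓢(EuclideanSpace ℝ (Fin n), ℂ)) :
    ∑' k : ℤ, ∫⁻ ξ, ‖bandCutoff hχ k ξ‖ₑ * ‖𝓕 (⇑f) ξ‖ₑ < ∞ := by
  rw [← lintegral_tsum fun k => ((bandCutoff hχ k).continuous.measurable.enorm.fun_mul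
    (continuous_fourier_schwartz f).measurable.enorm).aemeasurable]
  calc ∫⁻ ξ, ∑' k : ℤ, ‖bandCutoff hχ k ξ‖ₑ * ‖𝓕 (⇑f) ξ‖ₑ
      ≤ ∫⁻ ξ, 3 * ‖𝓕 (⇑f) ξ‖ₑ := by
        refine lintegral_mono fun ξ => ?_
        rw [ENNReal.tsum_mul_right]
        gcongr
        exact tsum_enorm_bandCutoff_le hχ ξ
    _ < ∞ := by
        rw [lintegral_const_mul' _ _ (by simp)]
        exact ENNReal.mul_lt_top (by simp) (lintegral_enorm_fourier_lt_top f)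

/-- The paraproduct series is dominated, uniformly in space, by a convergent series. -/
theorem exists_summable_bound_paraproduct (hχ : IsLPCutoff χ)
    (f₁ f₂ : 𝓢(EuclideanSpace ℝ (Fin n), ℂ)) :
    ∃ b : ℤ → ℝ≥0∞, ∑' k, b k ≠ ∞ ∧
      ∀ k x, ‖Dproj χ k (⇑f₂) x * Sproj χ (k - 1) (⇑f₁) x‖ₑ ≤ b k := by
  refine ⟨fun k => (∫⁻ ξ, ‖bandCutoff hχ k ξ‖ₑ * ‖𝓕 (⇑f₂) ξ‖ₑ) * ∫⁻ ξ, ‖𝓕 (⇑f₁) ξ‖ₑ, ?_, ?_⟩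
  · rw [ENNReal.tsum_mul_right]
    exact (ENNReal.mul_lt_top (tsum_lintegral_bandCutoff_lt_top hχ f₂)
      (lintegral_enorm_fourier_lt_top f₁)).ne
  · intro k x
    rw [enorm_mul]
    exact mul_le_mul' (enorm_Dproj_le hχ k _ x) (enorm_Sproj_le hχ _ _ x)

theorem lintegral_enorm_fourierInv_bandCutoff (hχ : IsLPCutoff χ) (j : ℤ) :
    ∫⁻ x, ‖𝓕⁻ (⇑(bandCutoff hχ j)) x‖ₑ = ∫⁻ x, ‖𝓕⁻ (⇑(bandCutoff hχ 0)) x‖ₑ := by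
  refine lintegral_enorm_fourierInv_comp_smul (r := 2 ^ (-j)) (by positivity) fun ξ => ?_
  rw [bandCutoff_apply, bandCutoff_apply, smul_smul, smul_smul, ← zpow_add₀ two_ne_zero,
    ← zpow_add₀ two_ne_zero]
  congr 4
  · congr 2
    ring
  · simp

theorem continuous_fourierInv_schwartz (m : 𝓢(EuclideanSpace ℝ (Fin n), ℂ)) :
    Continuous (𝓕⁻ (⇑m)) := by
  rw [← SchwartzMap.fourierInv_coe]
  exact (𝓕⁻ m).continuous

theorem Dproj_eq_integral (hχ : IsLPCutoff χ) (j : ℤ) {G : EuclideanSpace ℝ (Fin n) → ℂ}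
    (hG : Integrable G) (x : EuclideanSpace ℝ (Fin n)) :
    Dproj χ j G x = ∫ y, 𝓕⁻ (⇑(bandCutoff hχ j)) (x - y) * G y := by
  rw [Dproj_eq hχ]
  exact fourierInv_mul_fourier_eq_integral (bandCutoff hχ j).integrable hG x

/-- The Littlewood–Paley blocks are uniformly bounded on `L^p`. -/
theorem eLpNorm_Dproj_le (hχ : IsLPCutoff χ) (j : ℤ) {G : EuclideanSpace ℝ (Fin n) → ℂ}
    (hG : Integrable G) (hGc : Continuous G) {p : ℝ≥0∞} (hp : 1 ≤ p) :
    eLpNorm (Dproj χ j G) p volume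
      ≤ (∫⁻ x, ‖𝓕⁻ (⇑(bandCutoff hχ 0)) x‖ₑ) * eLpNorm G p volume := by
  rw [funext (Dproj_eq_integral hχ j hG), ← lintegral_enorm_fourierInv_bandCutoff hχ j]
  exact eLpNorm_integral_sub_mul_le (continuous_fourierInv_schwartz _) hGc hp

theorem Dproj_of_not_integrable (j : ℤ) {G : EuclideanSpace ℝ (Fin n) → ℂ}
    (hG : ¬ Integrable G) : Dproj χ j G = 0 := by
  have h : ∀ ξ, 𝓕 G ξ = 0 := fun ξ => by
    rw [Real.fourier_eq]
    exact integral_undef fun h => hG ((Real.fourierIntegral_convergent_iff ξ).1 h)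
  ext x
  simp [Dproj, h, Real.fourierInv_eq]

theorem Dproj_eq_Sproj_sub (hχ : IsLPCutoff χ) (j : ℤ) (f : 𝓢(EuclideanSpace ℝ (Fin n), ℂ))
    (x : EuclideanSpace ℝ (Fin n)) :
    Dproj χ j (⇑f) x = Sproj χ (j + 1) (⇑f) x - Sproj χ j (⇑f) x := by
  have h : schwartzMultiplier (bandCutoff hχ j) f
      = schwartzMultiplier (lowCutoff hχ (j + 1)) f - schwartzMultiplier (lowCutoff hχ j) f := by
    simp only [schwartzMultiplier, bandCutoff, map_sub, sub_apply]
    exact map_sub (FourierTransform.fourierInvCLM ℂ 𝓢(EuclideanSpace ℝ (Fin n), ℂ)) _ _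
  rw [Dproj_schwartz hχ, Sproj_schwartz hχ, Sproj_schwartz hχ, h, sub_apply]

theorem sum_Dproj_eq_Sproj_sub (hχ : IsLPCutoff χ) (k : ℤ) (f : 𝓢(EuclideanSpace ℝ (Fin n), ℂ))
    (x : EuclideanSpace ℝ (Fin n)) (N : ℕ) :
    ∑ m ∈ Finset.range N, Dproj χ (k - 1 - m) (⇑f) x
      = Sproj χ k (⇑f) x - Sproj χ (k - N) (⇑f) x := by
  induction N with
  | zero => simp
  | succ N ih =>
    rw [Finset.sum_range_succ, ih, Dproj_eq_Sproj_sub hχ,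
      show k - 1 - (N : ℤ) + 1 = k - N by ring,
      show k - ((N + 1 : ℕ) : ℤ) = k - 1 - N by push_cast; ring]
    ring

/-- Low-frequency projections vanish in the limit of vanishing frequency. -/
theorem tendsto_Sproj_zero (hn : 1 ≤ n) (hχ : IsLPCutoff χ) (k : ℤ)
    (f : 𝓢(EuclideanSpace ℝ (Fin n), ℂ)) (x : EuclideanSpace ℝ (Fin n)) :
    Tendsto (fun N : ℕ => Sproj χ (k - N) (⇑f) x) atTop (nhds 0) := by
  have : Nonempty (Fin n) := ⟨⟨0, hn⟩⟩
  have hint : Integrable (𝓕 (⇑f)) := by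
    rw [← SchwartzMap.fourier_coe]
    exact (𝓕 f).integrable
  simp_rw [Sproj_eq hχ, Real.fourierInv_eq]
  rw [show (0 : ℂ) = ∫ _ : EuclideanSpace ℝ (Fin n), (0 : ℂ) by simp]
  refine tendsto_integral_of_dominated_convergence (fun ξ => ‖𝓕 (⇑f) ξ‖) (fun N => ?_)
    hint.norm (fun N => .of_forall fun ξ => ?_) ?_
  · refine Continuous.aestronglyMeasurable ?_
    have h1 := (lowCutoff hχ (k - N)).continuous
    have h2 := continuous_fourier_schwartz f
    have h3 : Continuous fun ξ : EuclideanSpace ℝ (Fin n) => Real.fourierChar (inner ℝ ξ x) :=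
      Real.continuous_fourierChar.comp (by fun_prop)
    exact h3.smul (h1.mul h2)
  · rw [Circle.norm_smul, norm_mul]
    refine mul_le_of_le_one_left (norm_nonneg _) ?_
    have := enorm_lowCutoff_le_one hχ (k - N) ξ
    rwa [← ofReal_norm, ENNReal.ofReal_le_one] at this
  · have hne : ∀ᵐ ξ : EuclideanSpace ℝ (Fin n), ξ ≠ 0 := by
      simp [ae_iff]
    filter_upwards [hne] with ξ hξ
    have hlim : Tendsto (fun N : ℕ => (4 / 3 : ℝ) * (2 ^ k * (1 / 2) ^ N)) atTop (nhds 0) := by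
      simpa using ((tendsto_pow_atTop_nhds_zero_of_lt_one (r := (1 / 2 : ℝ)) (by norm_num)
        (by norm_num)).const_mul (2 ^ k)).const_mul (4 / 3)
    refine tendsto_const_nhds.congr' ?_
    filter_upwards [hlim.eventually (gt_mem_nhds (norm_pos_iff.2 hξ))] with N hN
    have h0 : lowCutoff hχ (k - N) ξ = 0 := by
      by_contra h
      have := norm_le_of_lowCutoff_ne_zero hχ h
      rw [zpow_sub₀ two_ne_zero, zpow_natCast, div_eq_mul_one_div ((2 : ℝ) ^ k),
        ← one_div_pow] at this
      linarith
    simp [h0]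

theorem eLpNorm_Sproj_le_tsum (hn : 1 ≤ n) (hχ : IsLPCutoff χ) (k : ℤ)
    (f : 𝓢(EuclideanSpace ℝ (Fin n), ℂ)) {p : ℝ≥0∞} (hp : 1 ≤ p) :
    eLpNorm (Sproj χ k (⇑f)) p volume
      ≤ ∑' m : ℕ, eLpNorm (Dproj χ (k - 1 - m) (⇑f)) p volume := by
  have hmeas : ∀ j, AEStronglyMeasurable (Dproj χ j (⇑f)) volume := fun j => by
    rw [Dproj_schwartz hχ]
    exact (schwartzMultiplier _ _).continuous.aestronglyMeasurable
  refine (Lp.eLpNorm_lim_le_liminf_eLpNorm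
    (f := fun N => ∑ m ∈ Finset.range N, Dproj χ (k - 1 - (m : ℤ)) (⇑f))
    (fun N => Finset.aestronglyMeasurable_sum _ fun m _ => hmeas _) _
    (.of_forall fun x => ?_)).trans ?_
  · simp_rw [Finset.sum_apply, sum_Dproj_eq_Sproj_sub hχ]
    simpa using (tendsto_Sproj_zero hn hχ k f x).const_sub (Sproj χ k (⇑f) x)
  · refine (liminf_le_liminf (.of_forall fun N => ?_)).trans_eq
      (liminf_const (∑' m : ℕ, eLpNorm (Dproj χ (k - 1 - m) (⇑f)) p volume))
    exact (eLpNorm_sum_le (fun m _ => hmeas _) hp).trans (ENNReal.sum_le_tsum _)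

/-- A term of the paraproduct series as a Schwartz function. -/
def paraTerm (hχ : IsLPCutoff χ) (f₁ f₂ : 𝓢(EuclideanSpace ℝ (Fin n), ℂ)) (k : ℤ) :
    𝓢(EuclideanSpace ℝ (Fin n), ℂ) :=
  SchwartzMap.pairing (ContinuousLinearMap.mul ℂ ℂ) (schwartzMultiplier (bandCutoff hχ k) f₂)
    (schwartzMultiplier (lowCutoff hχ (k - 1)) f₁)

theorem coe_paraTerm (hχ : IsLPCutoff χ) (f₁ f₂ : 𝓢(EuclideanSpace ℝ (Fin n), ℂ)) (k : ℤ) :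
    ⇑(paraTerm hχ f₁ f₂ k) = fun x => Dproj χ k (⇑f₂) x * Sproj χ (k - 1) (⇑f₁) x := by
  rw [Dproj_schwartz hχ, Sproj_schwartz hχ]
  rfl

/-- The terms of the paraproduct are spectrally supported in dyadic annuli. -/
theorem norm_bounds_of_fourier_paraTerm_ne_zero (hχ : IsLPCutoff χ)
    (f₁ f₂ : 𝓢(EuclideanSpace ℝ (Fin n), ℂ)) {k : ℤ} {ξ : EuclideanSpace ℝ (Fin n)}
    (h : 𝓕 (⇑(paraTerm hχ f₁ f₂ k)) ξ ≠ 0) :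
    1 / 12 * 2 ^ k ≤ ‖ξ‖ ∧ ‖ξ‖ ≤ 10 / 3 * 2 ^ k := by
  have hint : Integrable fun η => lowCutoff hχ (k - 1) η * 𝓕 (⇑f₁) η :=
    (SchwartzMap.pairing (ContinuousLinearMap.mul ℂ ℂ) (lowCutoff hχ (k - 1)) (𝓕 f₁)).integrable
  rw [coe_paraTerm, Dproj_schwartz hχ, Sproj_eq hχ,
    fourier_mul_fourierInv_eq_integral (SchwartzMap.integrable _) hint] at h
  obtain ⟨η, hη⟩ : ∃ η, 𝓕 (⇑(schwartzMultiplier (bandCutoff hχ k) f₂)) (ξ - η)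
      * (lowCutoff hχ (k - 1) η * 𝓕 (⇑f₁) η) ≠ 0 := by
    by_contra! hzero
    exact h (by simp [hzero])
  rw [fourier_schwartzMultiplier] at hη
  obtain ⟨h1, h2⟩ := norm_bounds_of_bandCutoff_ne_zero hχ
    (left_ne_zero_of_mul (left_ne_zero_of_mul hη))
  have h3 := norm_le_of_lowCutoff_ne_zero hχ (left_ne_zero_of_mul (right_ne_zero_of_mul hη))
  have h4 : (2 : ℝ) ^ (k - 1) = 2 ^ k / 2 := by rw [zpow_sub₀ two_ne_zero, zpow_one]
  rw [h4] at h3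
  have h5 := norm_sub_le ξ η
  have h6 := norm_sub_norm_le ξ η
  constructor <;> linarith

theorem Dproj_paraTerm_eq_zero (hχ : IsLPCutoff χ) (f₁ f₂ : 𝓢(EuclideanSpace ℝ (Fin n), ℂ))
    {j k : ℤ} (hjk : ¬(j ≤ k + 2 ∧ k ≤ j + 5)) : Dproj χ j (⇑(paraTerm hχ f₁ f₂ k)) = 0 := by
  have h : ∀ ξ, bandCutoff hχ j ξ * 𝓕 (⇑(paraTerm hχ f₁ f₂ k)) ξ = 0 := by
    intro ξ
    by_contra hne
    obtain ⟨h1, h2⟩ := norm_bounds_of_bandCutoff_ne_zero hχ (left_ne_zero_of_mul hne)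
    obtain ⟨h3, h4⟩ := norm_bounds_of_fourier_paraTerm_ne_zero hχ f₁ f₂
      (right_ne_zero_of_mul hne)
    exact hjk ⟨le_add_of_two_zpow_le (C := 40 / 9) (by linarith) (by norm_num),
      le_add_of_two_zpow_le (C := 32) (by linarith) (by norm_num)⟩
  rw [Dproj_eq hχ]
  ext x
  simp [h, Real.fourierInv_eq]

/-- Only eight terms of the paraproduct contribute to a given Littlewood–Paley block. -/
theorem Dproj_paraproduct_eq_sum (hχ : IsLPCutoff χ) (f₁ f₂ : 𝓢(EuclideanSpace ℝ (Fin n), ℂ))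
    (hF : Integrable fun x => ∑' k : ℤ, Dproj χ k (⇑f₂) x * Sproj χ (k - 1) (⇑f₁) x) (j : ℤ) :
    Dproj χ j (fun x => ∑' k : ℤ, Dproj χ k (⇑f₂) x * Sproj χ (k - 1) (⇑f₁) x)
      = ∑ i : Fin 8, Dproj χ j (⇑(paraTerm hχ f₁ f₂ (j - ((i : ℤ) - 5)))) := by
  obtain ⟨b, hb, hbound⟩ := exists_summable_bound_paraproduct hχ f₁ f₂
  ext x
  set K : EuclideanSpace ℝ (Fin n) → ℂ := 𝓕⁻ (⇑(bandCutoff hχ j)) with hK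
  have hKc : Continuous K := continuous_fourierInv_schwartz _
  have hKint : Integrable K := by
    rw [hK, ← SchwartzMap.fourierInv_coe]
    exact SchwartzMap.integrable _
  have hterm : ∀ k, Dproj χ j (⇑(paraTerm hχ f₁ f₂ k)) x
      = ∫ y, K (x - y) * paraTerm hχ f₁ f₂ k y :=
    fun k => Dproj_eq_integral hχ j (SchwartzMap.integrable _) x
  have hsum : Dproj χ j (fun x => ∑' k : ℤ, Dproj χ k (⇑f₂) x * Sproj χ (k - 1) (⇑f₁) x) x
      = ∑' k, Dproj χ j (⇑(paraTerm hχ f₁ f₂ k)) x := by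
    rw [Dproj_eq_integral hχ j hF]
    simp_rw [hterm, coe_paraTerm, ← tsum_mul_left]
    refine integral_tsum (fun k => ?_) ?_
    · have := (paraTerm hχ f₁ f₂ k).continuous
      rw [coe_paraTerm] at this
      exact ((hKc.comp (continuous_const.sub continuous_id)).mul this).aestronglyMeasurable
    · refine ne_top_of_le_ne_top (ENNReal.mul_ne_top hKint.2.ne hb) ?_
      rw [← ENNReal.tsum_mul_left]
      refine ENNReal.tsum_le_tsum fun k => ?_
      have hshift : ∫⁻ y, ‖K y‖ₑ = ∫⁻ y, ‖K (x - y)‖ₑ :=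
        (lintegral_sub_left_eq_self (fun y => ‖K y‖ₑ) x).symm
      have hKm : Measurable fun y => ‖K (x - y)‖ₑ :=
        (hKc.comp (continuous_const.sub continuous_id)).measurable.enorm
      rw [hshift, ← lintegral_mul_const _ hKm]
      refine lintegral_mono fun y => ?_
      rw [enorm_mul]
      gcongr
      exact hbound k y
  have hinj : Injective fun i : Fin 8 => j - ((i : ℤ) - 5) := by
    intro a c hac
    ext
    simp only at hac
    omega
  rw [hsum, ← hinj.tsum_eq, tsum_fintype, Finset.sum_apply]
  intro k hk
  by_cases hjk : j ≤ k + 2 ∧ k ≤ j + 5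
  · refine ⟨⟨(j - k + 5).toNat, by omega⟩, ?_⟩
    simp only
    omega
  · exact absurd (congrFun (Dproj_paraTerm_eq_zero hχ f₁ f₂ hjk) x) hk

theorem eLpNorm_Dproj_paraproduct_le (hχ : IsLPCutoff χ)
    (f₁ f₂ : 𝓢(EuclideanSpace ℝ (Fin n), ℂ)) {p p₃ p₄ : ℝ≥0∞} (hp : 1 ≤ p)
    (hp34 : 1 / p = 1 / p₃ + 1 / p₄) (j : ℤ) :
    eLpNorm (Dproj χ j fun x => ∑' k : ℤ, Dproj χ k (⇑f₂) x * Sproj χ (k - 1) (⇑f₁) x) p volume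
      ≤ (∫⁻ x, ‖𝓕⁻ (⇑(bandCutoff hχ 0)) x‖ₑ) * ∑ i : Fin 8,
        eLpNorm (Dproj χ (j - ((i : ℤ) - 5)) (⇑f₂)) p₄ volume
          * eLpNorm (Sproj χ (j - ((i : ℤ) - 5) - 1) (⇑f₁)) p₃ volume := by
  by_cases hF : Integrable fun x => ∑' k : ℤ, Dproj χ k (⇑f₂) x * Sproj χ (k - 1) (⇑f₁) x
  swap
  · rw [Dproj_of_not_integrable j hF]
    simp
  have : ENNReal.HolderTriple p₄ p₃ p := ⟨by simpa [add_comm] using hp34.symm⟩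
  have hsm : ∀ g : 𝓢(EuclideanSpace ℝ (Fin n), ℂ), AEStronglyMeasurable (⇑g) volume :=
    fun g => g.continuous.aestronglyMeasurable
  rw [Dproj_paraproduct_eq_sum hχ f₁ f₂ hF, Finset.mul_sum]
  refine (eLpNorm_sum_le (fun i _ => ?_) hp).trans (Finset.sum_le_sum fun i _ => ?_)
  · rw [Dproj_schwartz hχ]
    exact hsm _
  · refine (eLpNorm_Dproj_le hχ j (SchwartzMap.integrable _) (SchwartzMap.continuous _) hp).trans ?_
    gcongr
    rw [coe_paraTerm, Dproj_schwartz hχ, Sproj_schwartz hχ]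
    generalize schwartzMultiplier (bandCutoff hχ _) f₂ = u
    generalize schwartzMultiplier (lowCutoff hχ _) f₁ = v
    simpa using eLpNorm_le_eLpNorm_mul_eLpNorm_of_nnnorm (p := p₄) (q := p₃) (r := p) (hsm u)
      (hsm v) (· * ·) 1 (.of_forall fun x => by simp)

theorem two_rpow_add (a b : ℝ) : (2 : ℝ≥0∞) ^ (a + b) = 2 ^ a * 2 ^ b :=
  ENNReal.rpow_add _ _ two_ne_zero ENNReal.ofNat_ne_top

theorem two_rpow_lt_top (a : ℝ) : (2 : ℝ≥0∞) ^ a < ∞ :=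
  (ENNReal.rpow_ne_top_of_ne_zero two_ne_zero ENNReal.ofNat_ne_top).lt_top

theorem tsum_two_rpow_neg_lt_top {β : ℝ} (hβ : 0 < β) :
    ∑' m : ℕ, (2 : ℝ≥0∞) ^ (-(((m : ℝ) + 2) * β)) < ∞ := by
  have hterm : ∀ m : ℕ, (2 : ℝ≥0∞) ^ (-(((m : ℝ) + 2) * β))
      = (2 : ℝ≥0∞) ^ (-(2 * β)) * ((2 : ℝ≥0∞) ^ (-β)) ^ m := by
    intro m
    rw [← ENNReal.rpow_natCast, ← ENNReal.rpow_mul, ← two_rpow_add]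
    ring_nf
  simp_rw [hterm, ENNReal.tsum_mul_left]
  refine ENNReal.mul_lt_top (two_rpow_lt_top _) ?_
  rw [ENNReal.tsum_geometric, ENNReal.inv_lt_top]
  exact tsub_pos_of_lt (ENNReal.rpow_lt_one_of_one_lt_of_neg ENNReal.one_lt_two (by linarith))

theorem summable_of_enorm_le {b : ℤ → ℝ≥0∞} (hb : ∑' k, b k ≠ ∞) {u : ℤ → ℂ}
    (h : ∀ k, ‖u k‖ₑ ≤ b k) : Summable u := by
  refine Summable.of_norm_bounded (ENNReal.summable_toReal hb) fun k => ?_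
  rw [← toReal_enorm]
  exact ENNReal.toReal_mono (ENNReal.ne_top_of_tsum_ne_top hb k) (h k)

/-- For negative regularity, the blocks `Δ_j` may be replaced by the projections `S_{j-1}`. -/
theorem lqNorm_Sproj_le (hn : 1 ≤ n) (hχ : IsLPCutoff χ) (β : ℝ)
    (f : 𝓢(EuclideanSpace ℝ (Fin n), ℂ)) {p q : ℝ≥0∞} (hp : 1 ≤ p) (hq : 1 ≤ q) :
    lqNorm q (fun k => (2 : ℝ≥0∞) ^ ((k : ℝ) * -β) * eLpNorm (Sproj χ (k - 1) (⇑f)) p volume)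
      ≤ (∑' m : ℕ, (2 : ℝ≥0∞) ^ (-(((m : ℝ) + 2) * β))) * besovNorm χ (-β) p q (⇑f) := by
  refine le_trans (lqNorm_mono fun k => ?_)
    (lqNorm_tsum_weight_shift_le hq (fun m : ℕ => (2 : ℝ≥0∞) ^ (-(((m : ℝ) + 2) * β)))
      (fun m => (m : ℤ) + 2) _)
  refine (mul_le_mul_right (eLpNorm_Sproj_le_tsum hn hχ (k - 1) f hp) _).trans_eq ?_
  rw [← ENNReal.tsum_mul_left]
  refine tsum_congr fun m => ?_
  rw [show k - 1 - 1 - (m : ℤ) = k - (m + 2) by ring, ← mul_assoc, ← two_rpow_add]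
  congr 2
  push_cast
  ring

/-- The Besov bound for the paraproduct, with an explicit constant. -/
theorem besovNorm_paraproduct_le (hn : 1 ≤ n) (hχ : IsLPCutoff χ) (s β : ℝ)
    (f₁ f₂ : 𝓢(EuclideanSpace ℝ (Fin n), ℂ)) {p q p₃ p₄ q₃ q₄ : ℝ≥0∞}
    (hp : 1 ≤ p) (hq : 1 ≤ q) (hp₃ : 1 ≤ p₃) (hq₃ : 1 ≤ q₃) (hq₄ : 1 ≤ q₄)
    (hp34 : 1 / p = 1 / p₃ + 1 / p₄) (hq34 : 1 / q = 1 / q₃ + 1 / q₄) :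
    besovNorm χ s p q (fun x => ∑' k : ℤ, Dproj χ k (⇑f₂) x * Sproj χ (k - 1) (⇑f₁) x)
      ≤ (∫⁻ x, ‖𝓕⁻ (⇑(bandCutoff hχ 0)) x‖ₑ) * (∑ i : Fin 8, (2 : ℝ≥0∞) ^ (((i : ℝ) - 5) * s))
        * (∑' m : ℕ, (2 : ℝ≥0∞) ^ (-(((m : ℝ) + 2) * β)))
        * (besovNorm χ (-β) p₃ q₃ (⇑f₁) * besovNorm χ (s + β) p₄ q₄ (⇑f₂)) := by
  set M := ∫⁻ x, ‖𝓕⁻ (⇑(bandCutoff hχ 0)) x‖ₑ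
  set a : ℤ → ℝ≥0∞ := fun k =>
    (2 : ℝ≥0∞) ^ ((k : ℝ) * (s + β)) * eLpNorm (Dproj χ k (⇑f₂)) p₄ volume with ha
  set b : ℤ → ℝ≥0∞ := fun k =>
    (2 : ℝ≥0∞) ^ ((k : ℝ) * -β) * eLpNorm (Sproj χ (k - 1) (⇑f₁)) p₃ volume with hb
  set w : Fin 8 → ℝ≥0∞ := fun i => (2 : ℝ≥0∞) ^ (((i : ℝ) - 5) * s) with hw
  have hblock : ∀ j : ℤ, (2 : ℝ≥0∞) ^ ((j : ℝ) * s)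
      * eLpNorm (Dproj χ j fun x => ∑' k : ℤ, Dproj χ k (⇑f₂) x * Sproj χ (k - 1) (⇑f₁) x)
        p volume
      ≤ M * ∑' i : Fin 8, w i * (a (j - ((i : ℤ) - 5)) * b (j - ((i : ℤ) - 5))) := by
    intro j
    refine (mul_le_mul_right (eLpNorm_Dproj_paraproduct_le hχ f₁ f₂ hp hp34 j) _).trans_eq ?_
    rw [mul_left_comm, tsum_fintype, Finset.mul_sum]
    congr 1
    refine Finset.sum_congr rfl fun i _ => ?_
    have hpow : (2 : ℝ≥0∞) ^ ((j : ℝ) * s) = (2 : ℝ≥0∞) ^ (((i : ℝ) - 5) * s)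
        * ((2 : ℝ≥0∞) ^ (((j - ((i : ℤ) - 5) : ℤ) : ℝ) * (s + β))
          * (2 : ℝ≥0∞) ^ (((j - ((i : ℤ) - 5) : ℤ) : ℝ) * -β)) := by
      rw [← two_rpow_add, ← two_rpow_add]
      congr 1
      push_cast
      ring
    rw [hpow, ha, hb, hw]
    ring
  calc
    _ ≤ lqNorm q (fun j => M * ∑' i : Fin 8, w i
          * (a (j - ((i : ℤ) - 5)) * b (j - ((i : ℤ) - 5)))) := lqNorm_mono hblock
    _ = M * lqNorm q (fun j => ∑' i : Fin 8, w i
          * (a (j - ((i : ℤ) - 5)) * b (j - ((i : ℤ) - 5)))) := lqNorm_const_mul hq _ _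
    _ ≤ M * ((∑ i, w i) * lqNorm q fun k => a k * b k) := by
      gcongr
      rw [← tsum_fintype (L := .unconditional _) w]
      exact lqNorm_tsum_weight_shift_le hq w (fun i => (i : ℤ) - 5) fun k => a k * b k
    _ ≤ M * ((∑ i, w i) * (besovNorm χ (s + β) p₄ q₄ (⇑f₂)
          * ((∑' m : ℕ, (2 : ℝ≥0∞) ^ (-(((m : ℝ) + 2) * β))) * besovNorm χ (-β) p₃ q₃ (⇑f₁)))) := by
      gcongr
      refine (lqNorm_mul_le hq hq₄ hq₃ (hq34.trans (add_comm _ _)) a b).trans ?_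
      gcongr
      · exact le_rfl
      · exact lqNorm_Sproj_le hn hχ β f₁ hp₃ hq₃
    _ = _ := by ring

end LittlewoodPaley

/-- **Para-product estimate** `‖T_{f₁} f₂‖_{Ḃ^s_{p,q}} ≤ C ‖f₁‖_{Ḃ^{-β}_{p₃,q₃}}
‖f₂‖_{Ḃ^{s+β}_{p₄,q₄}}`: the series `T_{f₁} f₂ = Σ_{k∈ℤ} (Δ_k f₂)(S_{k-1} f₁)` converges
in the space of tempered distributions (pointwise, and when paired against any Schwartz
test function), and its sum obeys the stated Besov bound; the constant `C` depends only
on `n`, `χ`, `s`, `β` and the indices. -/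
theorem paraproduct_estimate'
    (n : ℕ) (hn : 1 ≤ n) (χ : EuclideanSpace ℝ (Fin n) → ℝ) (hχ : IsLPCutoff χ)
    (s β : ℝ) (hs : 0 < s) (hβ : 0 < β)
    (p q p₃ p₄ q₃ q₄ : ℝ≥0∞)
    (hp : 1 ≤ p) (hq : 1 ≤ q) (hp₃ : 1 ≤ p₃) (hp₄ : 1 ≤ p₄) (hq₃ : 1 ≤ q₃) (hq₄ : 1 ≤ q₄)
    (hp34 : 1 / p = 1 / p₃ + 1 / p₄) (hq34 : 1 / q = 1 / q₃ + 1 / q₄) :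
    ∃ C : ℝ≥0∞, 0 < C ∧ C < ∞ ∧
      ∀ f₁ f₂ : 𝓢(EuclideanSpace ℝ (Fin n), ℂ),
        (∀ x, Summable fun k : ℤ => Dproj χ k (⇑f₂) x * Sproj χ (k - 1) (⇑f₁) x) ∧
        (∀ g : 𝓢(EuclideanSpace ℝ (Fin n), ℂ),
          Summable fun k : ℤ => ∫ x, Dproj χ k (⇑f₂) x * Sproj χ (k - 1) (⇑f₁) x * g x) ∧
        besovNorm χ s p q (fun x => ∑' k : ℤ, Dproj χ k (⇑f₂) x * Sproj χ (k - 1) (⇑f₁) x) ≤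
          C * (besovNorm χ (-β) p₃ q₃ ⇑f₁ * besovNorm χ (s + β) p₄ q₄ ⇑f₂) := by
  refine ⟨(∫⁻ x, ‖𝓕⁻ (⇑(bandCutoff hχ 0)) x‖ₑ)
    * (∑ i : Fin 8, (2 : ℝ≥0∞) ^ (((i : ℝ) - 5) * s))
    * (∑' m : ℕ, (2 : ℝ≥0∞) ^ (-(((m : ℝ) + 2) * β))) + 1, by simp, ?_, fun f₁ f₂ => ?_⟩
  · refine ENNReal.add_lt_top.2 ⟨ENNReal.mul_lt_top (ENNReal.mul_lt_top ?_ ?_)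
      (tsum_two_rpow_neg_lt_top hβ), ENNReal.one_lt_top⟩
    · rw [← SchwartzMap.fourierInv_coe]
      exact (SchwartzMap.integrable _).2
    · exact ENNReal.sum_lt_top.2 fun i _ =>
        two_rpow_lt_top _
  obtain ⟨b, hb, hbound⟩ := exists_summable_bound_paraproduct hχ f₁ f₂
  refine ⟨fun x => summable_of_enorm_le hb fun k => hbound k x, fun g => ?_, ?_⟩
  · have hfin : ∑' k, b k * ∫⁻ x, ‖g x‖ₑ ≠ ∞ := by
      rw [ENNReal.tsum_mul_right]
      exact ENNReal.mul_ne_top hb g.integrable.2.ne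
    refine summable_of_enorm_le hfin fun k => (enorm_integral_le_lintegral_enorm _).trans ?_
    rw [← lintegral_const_mul _ g.continuous.measurable.enorm]
    refine lintegral_mono fun x => ?_
    rw [enorm_mul]
    gcongr
    exact hbound k x
  · refine (besovNorm_paraproduct_le hn hχ s β f₁ f₂ hp hq hp₃ hq₃ hq₄ hp34 hq34).trans ?_
    gcongr
    exact le_self_add
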